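/- Let F : E → ℝ be (γ,μ)-strongly quasar convex with respect to its minimizer x* for some γ ∈ (0,1] and 0 < μ ≤ L, and assume F is (ρ,L)-curvatured for some L > 0 and ρ ≤ L. Let 0 < s ≤ 1/L and let (x_n, y_n, z_n) be generated by Algorithm 1 (Nesterov accelerated gradient, 3-points form) with z₀ = x₀ and constant parameters α = 1/(1 + √(μs)), β = 1 − γ√(μs), η = √(s/μ). If ρ ≥ −γ√(μ/s), then for all n ∈ ℕ, F(x_n) − F(x*) ≤ (2/γ)(1 − γ√(μs))ⁿ (F(x₀) − F(x*)). -/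

import Mathlib

open scoped RealInnerProductSpace

/-!
Put `η = √(s / μ)`, so that `s = μ η²` and `√(μ s) = μ η`. One step of the algorithm multiplies
the energy `F x - F x* + μ / 2 * ‖z - x*‖²` by at most `1 - γ μ η`: the gradient step pays for
the square of the gradient, strong quasar convexity at `y` produces the contraction, and the
lower curvature bound between `x` and `y` costs a multiple of `‖z - y‖²` which the strict
convexity of the squared norm compensates exactly when `-γ ≤ ρ η`.

The initial energy is at most `2 / γ * (F x₀ - F x*)` because of quadratic growth: along a ray
from `x*`, quasar convexity is the differential inequality `γ ψ ≤ t ψ'` for the difference `ψ`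
between `F - F x*` and its claimed lower bound, so that `t ^ (-γ) * ψ t` is monotone, with
limit `0` at `0`. Compared with the upper curvature bound at `x*`, quadratic growth also gives
`γ μ ≤ (2 - γ) L`, whence `(γ μ η)² ≤ γ (2 - γ) L s ≤ 1` and the contraction factor is nonnegative.
-/

open Filter Topology Asymptotics

section DifferentialInequality

variable {f f' : ℝ → ℝ} {γ : ℝ}

theorem monotoneOn_rpow_neg_mul_of_mul_le_mul_deriv (hf : ∀ t, 0 < t → HasDerivAt f (f' t) t)
    (hode : ∀ t, 0 < t → γ * f t ≤ t * f' t) :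
    MonotoneOn (fun t ↦ t ^ (-γ) * f t) (Set.Ioi 0) := by
  have hderiv : ∀ t, 0 < t → HasDerivAt (fun t ↦ t ^ (-γ) * f t)
      (t ^ (-γ - 1) * (t * f' t - γ * f t)) t := by
    intro t ht
    refine ((Real.hasDerivAt_rpow_const (.inl ht.ne')).mul (hf t ht)).congr_deriv ?_
    have hpow : t ^ (-γ) = t ^ (-γ - 1) * t := by
      rw [← Real.rpow_add_one ht.ne', sub_add_cancel]
    rw [hpow]
    ring
  refine monotoneOn_of_hasDerivWithinAt_nonneg (convex_Ioi 0)
    (fun t ht ↦ (hderiv t ht).continuousAt.continuousWithinAt)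
    (fun t ht ↦ (hderiv t (interior_subset ht)).hasDerivWithinAt) fun t ht ↦ ?_
  have ht : 0 < t := interior_subset ht
  exact mul_nonneg (Real.rpow_nonneg ht.le _) (sub_nonneg.2 (hode t ht))

theorem nonneg_of_mul_le_mul_deriv_of_isLittleO (hf : ∀ t, 0 < t → HasDerivAt f (f' t) t)
    (hode : ∀ t, 0 < t → γ * f t ≤ t * f' t) (hlim : f =o[𝓝[>] 0] fun t ↦ t ^ γ)
    {t : ℝ} (ht : 0 < t) : 0 ≤ f t := by
  have htendsto : Tendsto (fun u ↦ u ^ (-γ) * f u) (𝓝[>] 0) (𝓝 0) := by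
    refine hlim.tendsto_div_nhds_zero.congr' ?_
    filter_upwards [self_mem_nhdsWithin] with u hu
    rw [Real.rpow_neg (Set.mem_Ioi.1 hu).le, div_eq_inv_mul]
  have hle : ∀ᶠ u in 𝓝[>] 0, u ^ (-γ) * f u ≤ t ^ (-γ) * f t := by
    filter_upwards [Ioc_mem_nhdsGT ht] with u hu
    exact monotoneOn_rpow_neg_mul_of_mul_le_mul_deriv hf hode hu.1 ht hu.2
  exact nonneg_of_mul_nonneg_right (le_of_tendsto htendsto hle) (Real.rpow_pos_of_pos ht _)

theorem isLittleO_rpow_nhdsGT_zero_of_hasDerivAt_zero (hγ : γ ≤ 1) (h0 : f 0 = 0)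
    (hf : HasDerivAt f 0 0) : f =o[𝓝[>] 0] fun t ↦ t ^ γ := by
  have hid : f =o[𝓝[>] 0] fun t ↦ t := by
    simpa [h0] using hf.isLittleO.mono nhdsWithin_le_nhds
  refine hid.trans_isBigO (.of_bound' ?_)
  filter_upwards [Ioc_mem_nhdsGT one_pos] with t ht
  rw [Real.norm_of_nonneg ht.1.le, Real.norm_of_nonneg (Real.rpow_nonneg ht.1.le γ)]
  simpa using Real.rpow_le_rpow_of_exponent_ge ht.1 ht.2 hγ

end DifferentialInequality

section Nesterov

variable {E : Type*} [NormedAddCommGroup E] {F : E → ℝ} {γ μ ρ L η : ℝ} {xstar : E}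

/-- The Lyapunov function of the accelerated method: the optimality gap at `x` plus the weighted
squared distance of `z` to the minimizer. -/
noncomputable def nesterovEnergy (μ : ℝ) (F : E → ℝ) (xstar x z : E) : ℝ :=
  F x - F xstar + μ / 2 * ‖z - xstar‖ ^ 2

theorem sub_le_nesterovEnergy (hμ : 0 ≤ μ) (F : E → ℝ) (xstar x z : E) :
    F x - F xstar ≤ nesterovEnergy μ F xstar x z :=
  le_add_of_nonneg_right (by positivity)

variable [InnerProductSpace ℝ E]

theorem norm_sq_one_sub_smul_add_smul (θ : ℝ) (u v : E) :
    ‖(1 - θ) • u + θ • v‖ ^ 2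
      = (1 - θ) * ‖u‖ ^ 2 + θ * ‖v‖ ^ 2 - θ * (1 - θ) * ‖u - v‖ ^ 2 := by
  rw [norm_add_sq_real, norm_sub_sq_real, real_inner_smul_left, real_inner_smul_right,
    norm_smul, norm_smul, mul_pow, mul_pow, Real.norm_eq_abs, Real.norm_eq_abs, sq_abs, sq_abs]
  ring

theorem norm_sq_one_sub_smul_add_smul_sub_smul_sub (θ η : ℝ) (a y z g : E) :
    ‖(1 - θ) • z + θ • y - η • g - a‖ ^ 2
      = (1 - θ) * ‖z - a‖ ^ 2 + θ * ‖y - a‖ ^ 2 - θ * (1 - θ) * ‖z - y‖ ^ 2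
        - 2 * η * (⟪g, y - a⟫ + (1 - θ) * ⟪g, z - y⟫) + η ^ 2 * ‖g‖ ^ 2 := by
  have hcombo : (1 - θ) • z + θ • y - η • g - a
      = ((1 - θ) • (z - a) + θ • (y - a)) - η • g := by module
  have hinner : (1 - θ) • (z - a) + θ • (y - a) = (y - a) + (1 - θ) • (z - y) := by module
  rw [hcombo, norm_sub_sq_real, norm_sq_one_sub_smul_add_smul, sub_sub_sub_cancel_right, hinner,
    real_inner_smul_right, real_inner_comm, inner_add_right, real_inner_smul_right, norm_smul,
    mul_pow, Real.norm_eq_abs, sq_abs]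
  ring

variable [CompleteSpace E]

theorem hasDerivAt_comp_add_smul {a d : E} {t : ℝ}
    (hF : DifferentiableAt ℝ F (a + t • d)) :
    HasDerivAt (fun t : ℝ ↦ F (a + t • d)) ⟪gradient F (a + t • d), d⟫ t := by
  have hline : HasDerivAt (fun t : ℝ ↦ a + t • d) d t := by
    simpa using ((hasDerivAt_id t).smul_const d).const_add a
  exact (hF.hasGradientAt.hasFDerivAt.comp_hasDerivAt t hline).congr_deriv (by simp)

theorem gradient_eq_zero_of_forall_le {a : E} (h : ∀ x, F a ≤ F x) : gradient F a = 0 := by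
  rw [gradient, IsLocalMin.fderiv_eq_zero (Eventually.of_forall h), map_zero]

/-- `(γ, μ)`-strong quasar convexity of `F` with respect to the point `xstar`; that `xstar`
minimizes `F` is a separate hypothesis. -/
def StronglyQuasarConvex (γ μ : ℝ) (F : E → ℝ) (xstar : E) : Prop :=
  ∀ x, F xstar ≥ F x + (1 / γ) * ⟪gradient F x, xstar - x⟫ + μ / 2 * ‖xstar - x‖ ^ 2

/-- `F` is `(a, L)`-curvatured: it is within `a / 2 * ‖x - y‖²` from below and `L / 2 * ‖x - y‖²`
from above of its first-order expansions. The lower curvature `a` may be negative. -/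
def Curvatured (a L : ℝ) (F : E → ℝ) : Prop :=
  ∀ x y, F x + ⟪gradient F x, y - x⟫ + a / 2 * ‖x - y‖ ^ 2 ≤ F y ∧
    F y ≤ F x + ⟪gradient F x, y - x⟫ + L / 2 * ‖x - y‖ ^ 2

namespace StronglyQuasarConvex

theorem mul_add_le_inner (hqc : StronglyQuasarConvex γ μ F xstar) (hγ : 0 < γ) (x : E) :
    γ * (F x - F xstar + μ / 2 * ‖x - xstar‖ ^ 2) ≤ ⟪gradient F x, x - xstar⟫ := by
  have h := mul_le_mul_of_nonneg_left (hqc x) hγ.le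
  rw [← neg_sub x xstar, inner_neg_right, norm_neg] at h
  have hcancel : γ * (1 / γ * -⟪gradient F x, x - xstar⟫) = -⟪gradient F x, x - xstar⟫ := by
    field_simp
  linear_combination h - hcancel

theorem quadratic_growth (hqc : StronglyQuasarConvex γ μ F xstar) (hγ0 : 0 < γ) (hγ1 : γ ≤ 1)
    (hF : Differentiable ℝ F) (hmin : ∀ x, F xstar ≤ F x) (x : E) :
    γ * μ / 2 * ‖x - xstar‖ ^ 2 ≤ (2 - γ) * (F x - F xstar) := by
  set d := x - xstar with hd
  let ψ : ℝ → ℝ := fun t ↦ (2 - γ) * (F (xstar + t • d) - F xstar) - γ * μ / 2 * ‖d‖ ^ 2 * t ^ 2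
  let ψ' : ℝ → ℝ := fun t ↦ (2 - γ) * ⟪gradient F (xstar + t • d), d⟫ - γ * μ * ‖d‖ ^ 2 * t
  have hderiv (t : ℝ) : HasDerivAt ψ (ψ' t) t := by
    refine ((((hasDerivAt_comp_add_smul (hF _)).sub_const (F xstar)).const_mul (2 - γ)).sub
      ((hasDerivAt_pow 2 t).const_mul (γ * μ / 2 * ‖d‖ ^ 2))).congr_deriv ?_
    simp only [ψ', Nat.cast_ofNat, Nat.add_one_sub_one, pow_one]
    ring
  have hode (t : ℝ) : γ * ψ t ≤ t * ψ' t := by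
    have h := mul_le_mul_of_nonneg_left (hqc.mul_add_le_inner hγ0 (xstar + t • d))
      (by linarith : 0 ≤ 2 - γ)
    rw [add_sub_cancel_left, norm_smul, mul_pow, Real.norm_eq_abs, sq_abs,
      real_inner_smul_right] at h
    linear_combination h
  have hψ'0 : ψ' 0 = 0 := by
    simp only [ψ', zero_smul, add_zero, mul_zero, sub_zero,
      gradient_eq_zero_of_forall_le hmin, inner_zero_left]
  have hlim : ψ =o[𝓝[>] 0] fun t ↦ t ^ γ :=
    isLittleO_rpow_nhdsGT_zero_of_hasDerivAt_zero hγ1 (by simp [ψ])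
      ((hderiv 0).congr_deriv hψ'0)
  have hψ1 : 0 ≤ ψ 1 := nonneg_of_mul_le_mul_deriv_of_isLittleO (fun t _ ↦ hderiv t)
    (fun t _ ↦ hode t) hlim one_pos
  simpa [ψ, hd] using hψ1

end StronglyQuasarConvex

namespace Curvatured

theorem sub_gradient_step_le (hcurv : Curvatured ρ L F) {s : ℝ} (hs : 0 ≤ s) (hLs : L * s ≤ 1)
    (y : E) : F (y - s • gradient F y) ≤ F y - s / 2 * ‖gradient F y‖ ^ 2 := by
  have h := (hcurv y (y - s • gradient F y)).2
  rw [sub_sub_cancel_left, sub_sub_cancel, inner_neg_right, real_inner_smul_right,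
    real_inner_self_eq_norm_sq, norm_smul, mul_pow, Real.norm_eq_abs, sq_abs] at h
  have hslack : 0 ≤ s / 2 * (1 - L * s) * ‖gradient F y‖ ^ 2 := by
    have := sub_nonneg.2 hLs
    positivity
  linear_combination h + hslack

theorem sub_inner_le_of_sub_eq_smul (hcurv : Curvatured ρ L F) {x y p : E} {q : ℝ}
    (hxy : y - x = q • p) :
    F y - q * ⟪gradient F y, p⟫ + ρ / 2 * q ^ 2 * ‖p‖ ^ 2 ≤ F x := by
  have h := (hcurv y x).1
  rw [← neg_sub y x, hxy, inner_neg_right, real_inner_smul_right, norm_smul, mul_pow,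
    Real.norm_eq_abs, sq_abs] at h
  linear_combination h

theorem mul_le_mul_of_stronglyQuasarConvex [Nontrivial E] (hcurv : Curvatured ρ L F)
    (hqc : StronglyQuasarConvex γ μ F xstar) (hγ0 : 0 < γ) (hγ1 : γ ≤ 1)
    (hF : Differentiable ℝ F) (hmin : ∀ x, F xstar ≤ F x) : γ * μ ≤ (2 - γ) * L := by
  obtain ⟨x, hx⟩ := exists_ne xstar
  have hpos : 0 < ‖x - xstar‖ ^ 2 := pow_pos (norm_pos_iff.2 (sub_ne_zero.2 hx)) 2
  have hupper : F x - F xstar ≤ L / 2 * ‖x - xstar‖ ^ 2 := by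
    have h := (hcurv xstar x).2
    rw [gradient_eq_zero_of_forall_le hmin, inner_zero_left,
      norm_sub_rev] at h
    linarith
  have hgrowth := hqc.quadratic_growth hγ0 hγ1 hF hmin x
  have hupper' := mul_le_mul_of_nonneg_left hupper (by linarith : 0 ≤ 2 - γ)
  refine le_of_mul_le_mul_right ?_ hpos
  linear_combination 2 * hgrowth + 2 * hupper'

theorem mul_mul_le_one_of_stronglyQuasarConvex [Nontrivial E] (hcurv : Curvatured ρ L F)
    (hqc : StronglyQuasarConvex γ μ F xstar) (hγ0 : 0 < γ) (hγ1 : γ ≤ 1) (hμ : 0 ≤ μ)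
    (hLs : L * (μ * η ^ 2) ≤ 1) (hF : Differentiable ℝ F) (hmin : ∀ x, F xstar ≤ F x) :
    γ * (μ * η) ≤ 1 := by
  have hγ2 : 0 ≤ 2 - γ := by linarith
  have hγμ : γ * μ ≤ (2 - γ) * L := hcurv.mul_le_mul_of_stronglyQuasarConvex hqc hγ0 hγ1 hF hmin
  refine (le_abs_self _).trans ((sq_le_one_iff_abs_le_one _).1 ?_)
  calc (γ * (μ * η)) ^ 2 = γ * μ * (γ * (μ * η ^ 2)) := by ring
    _ ≤ (2 - γ) * L * (γ * (μ * η ^ 2)) := by gcongr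
    _ = γ * (2 - γ) * (L * (μ * η ^ 2)) := by ring
    _ ≤ γ * (2 - γ) * 1 := by gcongr
    _ ≤ 1 := by linear_combination sq_nonneg (1 - γ)

end Curvatured

theorem StronglyQuasarConvex.nesterovEnergy_self_le (hqc : StronglyQuasarConvex γ μ F xstar)
    (hγ0 : 0 < γ) (hγ1 : γ ≤ 1) (hF : Differentiable ℝ F) (hmin : ∀ x, F xstar ≤ F x) (x : E) :
    nesterovEnergy μ F xstar x x ≤ 2 / γ * (F x - F xstar) := by
  rw [nesterovEnergy, div_mul_eq_mul_div 2, le_div_iff₀ hγ0]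
  linear_combination hqc.quadratic_growth hγ0 hγ1 hF hmin x

theorem nesterovEnergy_step_le (hqc : StronglyQuasarConvex γ μ F xstar)
    (hcurv : Curvatured ρ L F) (hμ : 0 ≤ μ) (hγ : 0 < γ) (hη : 0 ≤ η)
    (hγη : γ * (μ * η) ≤ 1) (hLη : L * (μ * η ^ 2) ≤ 1) (hρ : -γ ≤ ρ * η) {x y z : E}
    (hxy : y - x = (μ * η) • (z - y)) :
    nesterovEnergy μ F xstar (y - (μ * η ^ 2) • gradient F y)
        ((1 - γ * (μ * η)) • z + (γ * (μ * η)) • y - η • gradient F y)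
      ≤ (1 - γ * (μ * η)) * nesterovEnergy μ F xstar x z := by
  have hr : 0 ≤ 1 - γ * (μ * η) := sub_nonneg.2 hγη
  have hdescent := hcurv.sub_gradient_step_le (by positivity) hLη y
  have hquasar := mul_le_mul_of_nonneg_left (hqc.mul_add_le_inner hγ y) (mul_nonneg hμ hη)
  have hlower := mul_le_mul_of_nonneg_left (hcurv.sub_inner_le_of_sub_eq_smul hxy) hr
  have hcompensate : 0 ≤ (1 - γ * (μ * η)) * (μ ^ 2 * η / 2 * (ρ * η + γ) * ‖z - y‖ ^ 2) := by
    have : 0 ≤ ρ * η + γ := by linarith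
    positivity
  rw [nesterovEnergy, nesterovEnergy, norm_sq_one_sub_smul_add_smul_sub_smul_sub]
  linear_combination hdescent + hquasar + hlower + hcompensate

/-- The three-point form of Nesterov's accelerated gradient method with stepsize `s` and constant
parameters `α`, `β`, `η`. -/
structure IsNesterovSequence (F : E → ℝ) (s α β η : ℝ) (x y z : ℕ → E) : Prop where
  z_zero : z 0 = x 0
  y_eq (n : ℕ) : y n = α • x n + (1 - α) • z n
  x_succ (n : ℕ) : x (n + 1) = y n - s • gradient F (y n)
  z_succ (n : ℕ) : z (n + 1) = β • z n + (1 - β) • y n - η • gradient F (y n)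

namespace IsNesterovSequence

variable {x y z : ℕ → E}

theorem y_sub_x_eq_smul {s q β : ℝ} (hseq : IsNesterovSequence F s (1 / (1 + q)) β η x y z)
    (hq : 1 + q ≠ 0) (n : ℕ) : y n - x n = q • (z n - y n) := by
  rw [hseq.y_eq]
  match_scalars <;> field_simp <;> ring

theorem nesterovEnergy_le_geom
    (hseq : IsNesterovSequence F (μ * η ^ 2) (1 / (1 + μ * η)) (1 - γ * (μ * η)) η x y z)
    (hqc : StronglyQuasarConvex γ μ F xstar) (hcurv : Curvatured ρ L F) (hμ : 0 ≤ μ)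
    (hγ : 0 < γ) (hη : 0 ≤ η) (hγη : γ * (μ * η) ≤ 1) (hLη : L * (μ * η ^ 2) ≤ 1)
    (hρ : -γ ≤ ρ * η) (n : ℕ) :
    nesterovEnergy μ F xstar (x n) (z n)
      ≤ (1 - γ * (μ * η)) ^ n * nesterovEnergy μ F xstar (x 0) (z 0) := by
  refine le_geom (u := fun n ↦ nesterovEnergy μ F xstar (x n) (z n)) (sub_nonneg.2 hγη) n
    fun k _ ↦ ?_
  rw [hseq.x_succ, hseq.z_succ, sub_sub_cancel]
  exact nesterovEnergy_step_le hqc hcurv hμ hγ hη hγη hLη hρ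
    (hseq.y_sub_x_eq_smul (by positivity) k)

theorem sub_le_geom
    (hseq : IsNesterovSequence F (μ * η ^ 2) (1 / (1 + μ * η)) (1 - γ * (μ * η)) η x y z)
    (hqc : StronglyQuasarConvex γ μ F xstar) (hcurv : Curvatured ρ L F)
    (hF : Differentiable ℝ F) (hmin : ∀ x, F xstar ≤ F x) (hμ : 0 ≤ μ) (hγ0 : 0 < γ)
    (hγ1 : γ ≤ 1) (hη : 0 ≤ η) (hLη : L * (μ * η ^ 2) ≤ 1) (hρ : -γ ≤ ρ * η) (n : ℕ) :
    F (x n) - F xstar ≤ 2 / γ * (1 - γ * (μ * η)) ^ n * (F (x 0) - F xstar) := by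
  cases subsingleton_or_nontrivial E
  · have hgap (u : E) : F u - F xstar = 0 := by rw [Subsingleton.elim u xstar, sub_self]
    rw [hgap, hgap, mul_zero]
  have hγη : γ * (μ * η) ≤ 1 :=
    hcurv.mul_mul_le_one_of_stronglyQuasarConvex hqc hγ0 hγ1 hμ hLη hF hmin
  calc F (x n) - F xstar
      ≤ nesterovEnergy μ F xstar (x n) (z n) := sub_le_nesterovEnergy hμ ..
    _ ≤ (1 - γ * (μ * η)) ^ n * nesterovEnergy μ F xstar (x 0) (x 0) := by
      simpa only [hseq.z_zero] using
        hseq.nesterovEnergy_le_geom hqc hcurv hμ hγ0 hη hγη hLη hρ n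
    _ ≤ (1 - γ * (μ * η)) ^ n * (2 / γ * (F (x 0) - F xstar)) :=
      mul_le_mul_of_nonneg_left (hqc.nesterovEnergy_self_le hγ0 hγ1 hF hmin (x 0))
        (pow_nonneg (sub_nonneg.2 hγη) n)
    _ = 2 / γ * (1 - γ * (μ * η)) ^ n * (F (x 0) - F xstar) := by ring

end IsNesterovSequence

theorem stmt_2_general (hF : Differentiable ℝ F) (hmin : ∀ x, F xstar ≤ F x)
    (hqc : StronglyQuasarConvex γ μ F xstar) (hcurv : Curvatured ρ L F) (hγ0 : 0 < γ)
    (hγ1 : γ ≤ 1) (hμ : 0 < μ) {s : ℝ} (hs : 0 < s) (hLs : L * s ≤ 1) (hρ : -γ * √(μ / s) ≤ ρ)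
    {x y z : ℕ → E}
    (hseq : IsNesterovSequence F s (1 / (1 + √(μ * s))) (1 - γ * √(μ * s)) √(s / μ) x y z)
    (n : ℕ) : F (x n) - F xstar ≤ 2 / γ * (1 - γ * √(μ * s)) ^ n * (F (x 0) - F xstar) := by
  obtain ⟨η, hη, rfl⟩ : ∃ η, 0 < η ∧ s = μ * η ^ 2 :=
    ⟨√(s / μ), by positivity, by rw [Real.sq_sqrt (by positivity)]; field_simp⟩
  have hsqrt_mul : √(μ * (μ * η ^ 2)) = μ * η := by
    rw [show μ * (μ * η ^ 2) = (μ * η) ^ 2 by ring, Real.sqrt_sq (by positivity)]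
  have hsqrt_div : √(μ * η ^ 2 / μ) = η := by
    rw [mul_div_cancel_left₀ _ hμ.ne', Real.sqrt_sq hη.le]
  have hsqrt_inv : √(μ / (μ * η ^ 2)) = η⁻¹ := by
    rw [← inv_div, Real.sqrt_inv, hsqrt_div]
  rw [hsqrt_inv, ← div_eq_mul_inv, div_le_iff₀ hη] at hρ
  rw [hsqrt_mul, hsqrt_div] at hseq
  rw [hsqrt_mul]
  exact hseq.sub_le_geom hqc hcurv hF hmin hμ.le hγ0 hγ1 hη.le hLs hρ n

end Nesterov

/-- accelerated linear convergence of the Nesterov accelerated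
gradient algorithm (3-points form) for `(γ,μ)`-strongly quasar convex,
`(ρ,L)`-curvatured functions, provided `ρ ≥ -γ√(μ/s)`. -/
theorem stmt_2 {E : Type*} [NormedAddCommGroup E] [InnerProductSpace ℝ E]
    [FiniteDimensional ℝ E]
    (F : E → ℝ) (hF : Differentiable ℝ F)
    (L μ γ ρ s : ℝ) (hL : 0 < L) (hμ : 0 < μ) (hμL : μ ≤ L)
    (hγ0 : 0 < γ) (hγ1 : γ ≤ 1) (hρL : ρ ≤ L)
    (xstar : E) (hmin : ∀ x : E, F xstar ≤ F x)
    (hqc : ∀ x : E,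
      F xstar ≥ F x + (1 / γ) * ⟪gradient F x, xstar - x⟫ + μ / 2 * ‖xstar - x‖ ^ 2)
    (hcurv : ∀ x y : E,
      F x + ⟪gradient F x, y - x⟫ + ρ / 2 * ‖x - y‖ ^ 2 ≤ F y ∧
      F y ≤ F x + ⟪gradient F x, y - x⟫ + L / 2 * ‖x - y‖ ^ 2)
    (hs0 : 0 < s) (hs1 : s ≤ 1 / L)
    (hρ : ρ ≥ -γ * Real.sqrt (μ / s))
    (x y z : ℕ → E) (hz0 : z 0 = x 0)
    (hy : ∀ n : ℕ, y n = (1 / (1 + Real.sqrt (μ * s))) • x n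
      + (1 - 1 / (1 + Real.sqrt (μ * s))) • z n)
    (hx : ∀ n : ℕ, x (n + 1) = y n - s • gradient F (y n))
    (hz : ∀ n : ℕ, z (n + 1) = (1 - γ * Real.sqrt (μ * s)) • z n
      + (γ * Real.sqrt (μ * s)) • y n - Real.sqrt (s / μ) • gradient F (y n)) :
    ∀ n : ℕ, F (x n) - F xstar
      ≤ 2 / γ * (1 - γ * Real.sqrt (μ * s)) ^ n * (F (x 0) - F xstar) :=
  stmt_2_general hF hmin hqc hcurv hγ0 hγ1 hμ hs0 ((le_div_iff₀' hL).1 hs1) hρ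
    ⟨hz0, hy, hx, fun n ↦ by rw [hz, sub_sub_cancel]⟩
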